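/- Define I : ℤ × ℤ → ℤ by I(j,k) = |j| + |k| − 2 if j·k < 0 and I(j,k) = |j| + |k| − 1 otherwise, and for x, y ∈ ℤ² set i(x,y) = I(x − y). Let V ⊆ ℤ² be a set such that i(x,y) ≤ 1 for all distinct x, y ∈ V. Then there exists a translation t ∈ ℤ² such that either V + t ⊆ V₊ or σ(V) + t ⊆ V₊, where σ(j,k) = (k,j) and V₊ = {(0,0), (1,0), (−1,0), (0,1), (0,−1), (1,−1)}. In particular, |V| ≤ 6. -/

import Mathlib

/-- The combinatorial intersection pairing coming from the Dehn-twisted arcs `v_{jk}`. -/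
def Istep : ℤ × ℤ → ℤ := fun q =>
  if q.1 * q.2 < 0 then |q.1| + |q.2| - 2 else |q.1| + |q.2| - 1

/-- The reference configuration `V₊`. -/
def Vplus : Set (ℤ × ℤ) := {(0, 0), (1, 0), (-1, 0), (0, 1), (0, -1), (1, -1)}

/-!
Apart from the two differences `±(2, -2)`, the condition `Istep (j, k) ≤ 1` says that `(j, k)` has
length at most `2` in the norm whose unit ball is the hexagon `|j|, |k|, |j + k| ≤ 1`. A set of
diameter at most `2` for this norm has width at most `2` in each of the directions `j`, `k` and
`j + k`, hence fits in a unit hexagon or in one of the two triangles of side `2`. Since `(2, -2)`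
is not a difference, one of the two corners `(2, 0)`, `(0, 2)` of such a triangle is missing, and
what remains fits in a unit hexagon again. For the same reason one of the opposite vertices
`(1, -1)`, `(-1, 1)` of the hexagon is missing; the hexagon without `(-1, 1)` is `V₊`, and without
`(1, -1)` it is the reflection of `V₊`.
-/

open Set
open scoped Pointwise

theorem exists_mapsTo_Icc_of_sub_le {ι α : Type*} [ConditionallyCompleteLattice α] [AddGroup α]
    [AddRightMono α] [AddLeftMono α] {s : Set ι} {f : ι → α} {w : α}
    (h : ∀ x ∈ s, ∀ y ∈ s, f x - f y ≤ w) : ∃ a, MapsTo f s (Icc a (w + a)) := by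
  have lower_bound : ∀ x ∈ s, -w + f x ∈ lowerBounds (f '' s) := by
    rintro x hx _ ⟨y, hy, rfl⟩
    exact neg_add_le_iff_le_add.mpr (sub_le_iff_le_add.mp (h x hx y hy))
  refine ⟨sInf (f '' s), fun x hx => ⟨?_, ?_⟩⟩
  · exact csInf_le ⟨_, lower_bound x hx⟩ (mem_image_of_mem f hx)
  · exact neg_add_le_iff_le_add.mp (le_csInf ⟨_, mem_image_of_mem f hx⟩ (lower_bound x hx))

/-- The norm of the triangular lattice, with `±(1, 0)`, `±(0, 1)` and `±(1, -1)` as the six unit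
vectors; `Istep q ≤ 1` amounts to `hexNorm q ≤ 2` up to two exceptions. -/
def hexNorm (q : ℤ × ℤ) : ℤ := max (max |q.1| |q.2|) |q.1 + q.2|

theorem hexNorm_le_iff {q : ℤ × ℤ} {r : ℤ} :
    hexNorm q ≤ r ↔ |q.1| ≤ r ∧ |q.2| ≤ r ∧ |q.1 + q.2| ≤ r := by
  simp only [hexNorm, max_le_iff, and_assoc]

/-- The closed unit ball of `hexNorm`, seven points, of which `V₊` has six. -/
def hexagon : Set (ℤ × ℤ) := {q | hexNorm q ≤ 1}

theorem mem_hexagon {q : ℤ × ℤ} :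
    q ∈ hexagon ↔
      (-1 ≤ q.1 ∧ q.1 ≤ 1) ∧ (-1 ≤ q.2 ∧ q.2 ≤ 1) ∧ -1 ≤ q.1 + q.2 ∧ q.1 + q.2 ≤ 1 := by
  simp only [hexagon, mem_ofPred_eq, hexNorm_le_iff, abs_le]

theorem neg_mem_hexagon {q : ℤ × ℤ} : -q ∈ hexagon ↔ q ∈ hexagon := by
  simp only [mem_hexagon, Prod.fst_neg, Prod.snd_neg]
  omega

theorem swap_mem_hexagon {q : ℤ × ℤ} : q.swap ∈ hexagon ↔ q ∈ hexagon := by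
  simp only [mem_hexagon, Prod.fst_swap, Prod.snd_swap]
  omega

theorem Vplus_eq_hexagon_sdiff : Vplus = hexagon \ {(-1, 1)} := by
  ext ⟨j, k⟩
  simp only [Vplus, mem_insert_iff, mem_singleton_iff, mem_sdiff, mem_hexagon, Prod.mk.injEq]
  omega

theorem encard_Vplus : Vplus.encard = 6 := by
  have coe_eq : (({(0, 0), (1, 0), (-1, 0), (0, 1), (0, -1), (1, -1)} : Finset (ℤ × ℤ)) :
      Set (ℤ × ℤ)) = Vplus := by
    simp only [Vplus, Finset.coe_insert, Finset.coe_singleton]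
  rw [← coe_eq, encard_coe_eq_coe_finsetCard]
  rfl

theorem Istep_of_mul_nonneg {q : ℤ × ℤ} (h : 0 ≤ q.1 * q.2) : Istep q = |q.1 + q.2| - 1 := by
  rw [Istep, if_neg h.not_gt, abs_add_eq_add_abs_iff _ _ |>.mpr (mul_nonneg_iff.mp h)]

theorem Istep_of_mul_neg {q : ℤ × ℤ} (h : q.1 * q.2 < 0) : Istep q = |q.1 - q.2| - 2 := by
  have abs_sub_eq : |q.1 - q.2| = |q.1| + |q.2| := by
    rw [sub_eq_add_neg, abs_add_eq_add_abs_iff _ _ |>.mpr, abs_neg]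
    rw [← mul_nonneg_iff, mul_neg]
    exact neg_nonneg.mpr h.le
  rw [Istep, if_pos h, abs_sub_eq]

theorem Istep_le_one_iff {q : ℤ × ℤ} :
    Istep q ≤ 1 ↔ hexNorm q ≤ 2 ∧ q ≠ (2, -2) ∧ q ≠ (-2, 2) := by
  obtain ⟨j, k⟩ := q
  simp only [hexNorm_le_iff, ne_eq, Prod.mk.injEq, abs_le]
  rcases lt_or_ge (j * k) 0 with hjk | hjk
  · rw [Istep_of_mul_neg hjk, sub_le_iff_le_add, abs_le]
    rcases mul_neg_iff.mp hjk with _ | _ <;> omega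
  · rw [Istep_of_mul_nonneg hjk, sub_le_iff_le_add, abs_le]
    rcases mul_nonneg_iff.mp hjk with _ | _ <;> omega

/-- The triangle of side `2` with vertices `(0, 0)`, `(2, 0)` and `(0, 2)`. Up to translation, it
and its negative are the only maximal sets of `hexNorm`-diameter `2` besides `hexagon`. -/
def triangle : Set (ℤ × ℤ) := {q | 0 ≤ q.1 ∧ 0 ≤ q.2 ∧ q.1 + q.2 ≤ 2}

theorem exists_mapsTo_add_hexagon_or_triangle {V : Set (ℤ × ℤ)}
    (hV : ∀ x ∈ V, ∀ y ∈ V, hexNorm (x - y) ≤ 2) :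
    ∃ t, MapsTo (· + t) V hexagon ∨ MapsTo (· + t) V triangle ∨
      MapsTo (· + t) (-V) triangle := by
  have width : ∀ x ∈ V, ∀ y ∈ V,
      x.1 - y.1 ≤ 2 ∧ x.2 - y.2 ≤ 2 ∧ (x.1 + x.2) - (y.1 + y.2) ≤ 2 := by
    intro x hx y hy
    obtain ⟨h₁, h₂, h₃⟩ := hexNorm_le_iff.mp (hV x hx y hy)
    exact ⟨le_of_abs_le h₁, le_of_abs_le h₂, add_sub_add_comm x.1 x.2 y.1 y.2 ▸ le_of_abs_le h₃⟩
  obtain ⟨a, ha⟩ := exists_mapsTo_Icc_of_sub_le fun x hx y hy => (width x hx y hy).1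
  obtain ⟨b, hb⟩ := exists_mapsTo_Icc_of_sub_le fun x hx y hy => (width x hx y hy).2.1
  obtain ⟨c, hc⟩ := exists_mapsTo_Icc_of_sub_le fun x hx y hy => (width x hx y hy).2.2
  simp only [MapsTo, mem_Icc] at ha hb hc
  -- The strip `c ≤ j + k ≤ c + 2` cuts the square `[a, a + 2] × [b, b + 2]` in a hexagon when it is
  -- centred on the square, and otherwise leaves at most the triangle at a corner.
  rcases lt_trichotomy c (a + b + 1) with hlt | heq | hgt
  · refine ⟨(-a, -b), .inr (.inl fun x hx => ?_)⟩
    specialize ha hx; specialize hb hx; specialize hc hx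
    simp only [triangle, mem_ofPred_eq, Prod.fst_add, Prod.snd_add]
    omega
  · refine ⟨(-a - 1, -b - 1), .inl fun x hx => ?_⟩
    specialize ha hx; specialize hb hx; specialize hc hx
    simp only [mem_hexagon, Prod.fst_add, Prod.snd_add]
    omega
  · refine ⟨(a + 2, b + 2), .inr (.inr fun x hx => ?_)⟩
    rw [mem_neg] at hx
    specialize ha hx; specialize hb hx; specialize hc hx
    simp only [Prod.fst_neg, Prod.snd_neg] at ha hb hc
    simp only [triangle, mem_ofPred_eq, Prod.fst_add, Prod.snd_add]
    omega

theorem sub_one_zero_mem_hexagon_of_mem_triangle {q : ℤ × ℤ} (hq : q ∈ triangle)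
    (hne : q ≠ (0, 2)) : q - (1, 0) ∈ hexagon := by
  obtain ⟨j, k⟩ := q
  simp only [triangle, mem_ofPred_eq, ne_eq, Prod.mk.injEq] at hq hne
  simp only [mem_hexagon, Prod.mk_sub_mk]
  omega

theorem sub_zero_one_mem_hexagon_of_mem_triangle {q : ℤ × ℤ} (hq : q ∈ triangle)
    (hne : q ≠ (2, 0)) : q - (0, 1) ∈ hexagon := by
  obtain ⟨j, k⟩ := q
  simp only [triangle, mem_ofPred_eq, ne_eq, Prod.mk.injEq] at hq hne
  simp only [mem_hexagon, Prod.mk_sub_mk]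
  omega

theorem forall_add_ne_or_forall_add_ne {G : Type*} [AddGroup G] {V : Set G} {p q : G}
    (hV : ∀ x ∈ V, ∀ y ∈ V, x - y ≠ p - q) (t : G) :
    (∀ x ∈ V, x + t ≠ p) ∨ ∀ y ∈ V, y + t ≠ q := by
  by_contra! ⟨⟨x, hx, hxp⟩, y, hy, hyq⟩
  exact hV x hx y hy (by rw [← hxp, ← hyq, add_sub_add_right_eq_sub])

theorem exists_mapsTo_add_hexagon_of_triangle {V : Set (ℤ × ℤ)} {t : ℤ × ℤ}
    (ht : MapsTo (· + t) V triangle) (hV : ∀ x ∈ V, ∀ y ∈ V, x - y ≠ (2, -2)) :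
    ∃ t, MapsTo (· + t) V hexagon := by
  rcases forall_add_ne_or_forall_add_ne (p := (2, 0)) (q := (0, 2)) hV t with hne | hne
  · refine ⟨t - (0, 1), fun x hx => ?_⟩
    simpa only [add_sub_assoc] using sub_zero_one_mem_hexagon_of_mem_triangle (ht hx) (hne x hx)
  · refine ⟨t - (1, 0), fun x hx => ?_⟩
    simpa only [add_sub_assoc] using sub_one_zero_mem_hexagon_of_mem_triangle (ht hx) (hne x hx)

theorem exists_mapsTo_add_hexagon {V : Set (ℤ × ℤ)}
    (hnorm : ∀ x ∈ V, ∀ y ∈ V, hexNorm (x - y) ≤ 2) (hV : ∀ x ∈ V, ∀ y ∈ V, x - y ≠ (2, -2)) :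
    ∃ t, MapsTo (· + t) V hexagon := by
  obtain ⟨t, ht | ht | ht⟩ := exists_mapsTo_add_hexagon_or_triangle hnorm
  · exact ⟨t, ht⟩
  · exact exists_mapsTo_add_hexagon_of_triangle ht hV
  · have hV_neg : ∀ x ∈ -V, ∀ y ∈ -V, x - y ≠ (2, -2) := fun x hx y hy =>
      neg_sub_neg y x ▸ hV (-y) hy (-x) hx
    obtain ⟨u, hu⟩ := exists_mapsTo_add_hexagon_of_triangle ht hV_neg
    refine ⟨-u, fun x hx => neg_mem_hexagon.mp ?_⟩
    simpa only [neg_add, neg_neg] using hu (neg_mem_neg.mpr hx)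

theorem mapsTo_add_Vplus_or_mapsTo_swap_add_Vplus {V : Set (ℤ × ℤ)} {t : ℤ × ℤ}
    (ht : MapsTo (· + t) V hexagon) (hV : ∀ x ∈ V, ∀ y ∈ V, x - y ≠ (2, -2)) :
    MapsTo (· + t) V Vplus ∨ MapsTo (fun x => x.swap + t.swap) V Vplus := by
  rw [Vplus_eq_hexagon_sdiff]
  rcases forall_add_ne_or_forall_add_ne (p := (1, -1)) (q := (-1, 1)) hV t with hne | hne
  · refine .inr fun x hx => ?_
    have swap_ne : (x + t).swap ≠ (-1, 1) := by
      simpa only [Prod.swap_prod_mk] using Prod.swap_injective.ne (hne x hx)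
    simp only [← Prod.swap_add]
    exact ⟨swap_mem_hexagon.mpr (ht hx), swap_ne⟩
  · exact .inl fun x hx => ⟨ht hx, hne x hx⟩

/-- Any subset of `ℤ²` on which the pairing `i(x,y) = Istep (x - y)` is at most `1`
is, up to translation and possibly the reflection `(j,k) ↦ (k,j)`, contained in `V₊`;
in particular it has at most 6 elements. -/
theorem zsq_configurations_contained_in_Vplus (V : Set (ℤ × ℤ))
    (hV : ∀ x ∈ V, ∀ y ∈ V, x ≠ y → Istep (x - y) ≤ 1) :
    (∃ t : ℤ × ℤ,
      ((fun x => x + t) '' V ⊆ Vplus) ∨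
      ((fun x => x + t) '' ((fun q : ℤ × ℤ => (q.2, q.1)) '' V) ⊆ Vplus)) ∧
    V.encard ≤ 6 := by
  have hV_diff : ∀ x ∈ V, ∀ y ∈ V, hexNorm (x - y) ≤ 2 ∧ x - y ≠ (2, -2) := by
    intro x hx y hy
    rcases eq_or_ne x y with rfl | hxy
    · rw [sub_self]
      decide
    · exact (Istep_le_one_iff.mp (hV x hx y hy hxy)).imp_right And.left
  have hV_ne : ∀ x ∈ V, ∀ y ∈ V, x - y ≠ (2, -2) := fun x hx y hy => (hV_diff x hx y hy).2
  obtain ⟨t, ht⟩ := exists_mapsTo_add_hexagon (fun x hx y hy => (hV_diff x hx y hy).1) hV_ne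
  rw [← encard_Vplus]
  rcases mapsTo_add_Vplus_or_mapsTo_swap_add_Vplus ht hV_ne with hmaps | hmaps
  · exact ⟨⟨t, .inl hmaps.image_subset⟩,
      encard_le_encard_of_injOn hmaps (add_left_injective t).injOn⟩
  · refine ⟨⟨t.swap, .inr ?_⟩, encard_le_encard_of_injOn hmaps
      ((add_left_injective t.swap).comp Prod.swap_injective).injOn⟩
    rw [image_image]
    exact hmaps.image_subset
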